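/- Let M, L be Lagrangian subspaces of V. For K ∈ ℂ(M\H/L, ψ) and f ∈ ℂ(L\H, ψ), define (K ∗ f)(h) = q^{−(n+1)} Σ_{h'∈H} K(h')·f(h'⁻¹·h). Then K ∗ f ∈ ℂ(M\H, ψ), and the resulting map I : ℂ(M\H/L, ψ) → Hom_H(ℂ(L\H, ψ), ℂ(M\H, ψ)), I[K](f) = K ∗ f, is a linear isomorphism onto the space of H-equivariant linear maps. -/

import Mathlib

open scoped BigOperators
attribute [local instance] Classical.propDecidable

variable {k : Type} [Field k] [Fintype k]
variable {V : Type} [AddCommGroup V] [Module k V] [Fintype V]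

/-- Multiplication of the Heisenberg group `H = V × k`:
`(v,z)·(v',z') = (v + v', z + z' + (1/2) ω(v,v'))`. -/
def hMul (ω : V →ₗ[k] V →ₗ[k] k) (x y : V × k) : V × k :=
  (x.1 + y.1, x.2 + y.2 + (2 : k)⁻¹ * ω x.1 y.1)

/-- Inversion in the Heisenberg group. -/
def hInv (ω : V →ₗ[k] V →ₗ[k] k) (x : V × k) : V × k :=
  (-x.1, -x.2 + (2 : k)⁻¹ * ω x.1 x.1)

/-- Right translation `(π(h)f)(h') = f(h'·h)` of functions on the Heisenberg group. -/
def rt (ω : V →ₗ[k] V →ₗ[k] k) (h : V × k) (f : V × k → ℂ) : V × k → ℂ :=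
  fun x => f (hMul ω x h)

/-- The model `ℂ(L\H, ψ)`: functions `f : H → ℂ` with `f((0,z)·(l,0)·h) = ψ(z)·f(h)`
for `z ∈ k`, `l ∈ L`. -/
noncomputable def model (ω : V →ₗ[k] V →ₗ[k] k) (L : Submodule k V) (ψ : k → ℂ) :
    Submodule ℂ (V × k → ℂ) where
  carrier := {f | ∀ z : k, ∀ l ∈ L, ∀ h : V × k,
    f (hMul ω ((0 : V), z) (hMul ω (l, (0 : k)) h)) = ψ z * f h}
  add_mem' := by
    intro f g hf hg z l hl h
    simp only [Pi.add_apply, hf z l hl h, hg z l hl h]; ring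
  zero_mem' := by intro z l hl h; simp
  smul_mem' := by
    intro c f hf z l hl h
    simp only [Pi.smul_apply, smul_eq_mul, hf z l hl h]; ring

/-- The space `ℂ(M\H/L, ψ)`: functions `K : H → ℂ` with
`K((0,z)·(m,0)·h·(l,0)) = ψ(z)·K(h)` for `z ∈ k`, `m ∈ M`, `l ∈ L`. -/
noncomputable def biModel (ω : V →ₗ[k] V →ₗ[k] k) (M L : Submodule k V) (ψ : k → ℂ) :
    Submodule ℂ (V × k → ℂ) where
  carrier := {f | ∀ z : k, ∀ m ∈ M, ∀ l ∈ L, ∀ h : V × k,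
    f (hMul ω (hMul ω (hMul ω ((0 : V), z) (m, (0 : k))) h) (l, (0 : k))) = ψ z * f h}
  add_mem' := by
    intro f g hf hg z m hm l hl h
    simp only [Pi.add_apply, hf z m hm l hl h, hg z m hm l hl h]; ring
  zero_mem' := by intro z m hm l hl h; simp
  smul_mem' := by
    intro c f hf z m hm l hl h
    simp only [Pi.smul_apply, smul_eq_mul, hf z m hm l hl h]; ring

/-- The averaging operator `F_{M,L}[f](h) = ∑_{m ∈ M} f((m,0)·h)`. -/
noncomputable def avg (ω : V →ₗ[k] V →ₗ[k] k) (M : Submodule k V) :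
    (V × k → ℂ) →ₗ[ℂ] (V × k → ℂ) where
  toFun f := fun h => ∑ m : M, f (hMul ω ((m : V), (0 : k)) h)
  map_add' f g := by funext h; simp [Finset.sum_add_distrib]
  map_smul' c f := by funext h; simp [Finset.mul_sum]

/-- Normalized convolution on the Heisenberg group:
`(K ∗ f)(h) = q^{-(n+1)} ∑_{h' ∈ H} K(h')·f(h'⁻¹·h)`. -/
noncomputable def conv (ω : V →ₗ[k] V →ₗ[k] k) (n : ℕ) (K f : V × k → ℂ) : V × k → ℂ :=
  fun h => ((Fintype.card k : ℂ))⁻¹ ^ (n + 1) * ∑ x : V × k, K x * f (hMul ω (hInv ω x) h)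

/-- The one-dimensional Gauss sum `G(ψ) = ∑_{z ∈ k} ψ(z²/2)`. -/
noncomputable def gaussSum' (ψ : k → ℂ) : ℂ := ∑ z : k, ψ ((2 : k)⁻¹ * z ^ 2)

/-- The normalization coefficient `A_{M°,L°} = (G(ψ)/q)ⁿ · σ((−1)^{n(n−1)/2} ω_∧(o_L,o_M))`,
with the orientations presented by bases and `ω_∧(o_L,o_M) = det (ω(bL i, bM j))_{ij}`,
and `σ` the Legendre (quadratic) character. -/
noncomputable def Acoef (ω : V →ₗ[k] V →ₗ[k] k) (ψ : k → ℂ) (n : ℕ)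
    {M L : Submodule k V} (bM : Module.Basis (Fin n) k M) (bL : Module.Basis (Fin n) k L) : ℂ :=
  (gaussSum' ψ / (Fintype.card k : ℂ)) ^ n *
    ((quadraticChar k ((-1 : k) ^ (n * (n - 1) / 2) *
      (Matrix.of fun i j => ω ((bL i : V)) ((bM j : V))).det) : ℤ) : ℂ)

/-- The symplectic group `Sp(V)` of linear automorphisms of `V` preserving `ω`. -/
def Sp (ω : V →ₗ[k] V →ₗ[k] k) : Subgroup (V ≃ₗ[k] V) where
  carrier := {g | ∀ u v : V, ω (g u) (g v) = ω u v}
  one_mem' := by intro u v; rfl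
  mul_mem' := by
    intro a b ha hb u v
    have h : ∀ x : V, (a * b) x = a (b x) := fun x => rfl
    rw [h, h, ha, hb]
  inv_mem' := by
    intro a ha u v
    have h1 : a (a⁻¹ u) = u := a.apply_symm_apply u
    have h2 : a (a⁻¹ v) = v := a.apply_symm_apply v
    have := ha (a⁻¹ u) (a⁻¹ v)
    rw [h1, h2] at this
    exact this.symm

/-- A nontrivial (nowhere-vanishing) additive character `ψ : k → ℂ*`. -/
def IsAddChar (ψ : k → ℂ) : Prop :=
  (∀ a b : k, ψ (a + b) = ψ a * ψ b) ∧ (∀ a : k, ψ a ≠ 0) ∧ (∃ a : k, ψ a ≠ 1)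

/-- `π` is a Heisenberg representation on `ℋ` with central character `ψ`:
a representation of `H = V × k` by linear maps, with the center acting by `ψ`,
which is irreducible. -/
def IsHeisenbergRep (ω : V →ₗ[k] V →ₗ[k] k) (ψ : k → ℂ)
    {ℋ : Type} [AddCommGroup ℋ] [Module ℂ ℋ] (π : V × k → (ℋ →ₗ[ℂ] ℋ)) : Prop :=
  π ((0 : V), (0 : k)) = LinearMap.id ∧
  (∀ x y : V × k, π (hMul ω x y) = (π x).comp (π y)) ∧
  (∀ z : k, π ((0 : V), z) = ψ z • LinearMap.id) ∧
  (∀ W : Submodule ℂ ℋ, (∀ x : V × k, ∀ w ∈ W, π x w ∈ W) → W = ⊥ ∨ W = ⊤)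

/-- The action `g_*` of a symplectic automorphism on functions on `H`, `(g_* f)(h) = f(g⁻¹·h)`. -/
def gstar (g : V ≃ₗ[k] V) (f : V × k → ℂ) : V × k → ℂ :=
  fun x => f (g.symm x.1, x.2)

/-!
The function `δ` equal to `ψ` on the subgroup `L × k` and to zero off it is a two-sided unit:
`K ∗ δ = K` for every kernel `K`, and `δ ∗ f = f` for every `f ∈ ℂ(L\H, ψ)`. The first identity
recovers `K` from `I[K]`. Since `K ∗ f` is a linear combination of right translates of `K`, an
equivariant map `T` satisfies `T f = T (δ ∗ f) = T δ ∗ f`; hence `T = I[T δ]`, and `T δ` is a kernel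
because `δ` is fixed by right translation by `L`.
-/

section Group

omit [Fintype k] [Fintype V]

variable (ω : V →ₗ[k] V →ₗ[k] k)

/-- The Heisenberg group structure on `V × k`. It depends on `ω`, so it is not an instance but is
introduced locally where facts about general groups are applied to `hMul` and `hInv`. -/
abbrev heisenbergGroup : Group (V × k) where
  mul := hMul ω
  one := (0, 0)
  inv := hInv ω
  mul_assoc x y z := Prod.ext (add_assoc ..) <| by
    change (hMul ω (hMul ω x y) z).2 = (hMul ω x (hMul ω y z)).2
    simp only [hMul, map_add, LinearMap.add_apply]
    ring
  one_mul x := by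
    change hMul ω (0, 0) x = x
    simp [hMul]
  mul_one x := by
    change hMul ω x (0, 0) = x
    simp [hMul]
  inv_mul_cancel x := by
    change hMul ω (hInv ω x) x = (0, 0)
    simp [hMul, hInv]

theorem hMul_assoc (x y z : V × k) : hMul ω (hMul ω x y) z = hMul ω x (hMul ω y z) :=
  (heisenbergGroup ω).mul_assoc x y z

theorem hMul_zero (x : V × k) : hMul ω x (0, 0) = x :=
  (heisenbergGroup ω).mul_one x

theorem center_hMul (v : V) (z : k) : hMul ω (0, z) (v, 0) = (v, z) := by
  simp [hMul]

theorem hMul_eq_center_hMul (h x : V × k) :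
    hMul ω h x = hMul ω (0, x.2) (hMul ω h (x.1, 0)) := by
  ext
  · simp [hMul]
  · simp only [hMul, map_zero, LinearMap.zero_apply]
    ring

variable {ω} in
theorem hInv_eq_neg {x : V × k} (hx : ω x.1 x.1 = 0) : hInv ω x = -x := by
  simp [hInv, hx, Prod.ext_iff]

end Group

section Convolution

variable (ω : V →ₗ[k] V →ₗ[k] k) (n : ℕ)

theorem add_conv (K K' f : V × k → ℂ) : conv ω n (K + K') f = conv ω n K f + conv ω n K' f := by
  funext h
  simp only [conv, Pi.add_apply, add_mul, Finset.sum_add_distrib, mul_add]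

theorem smul_conv (c : ℂ) (K f : V × k → ℂ) : conv ω n (c • K) f = c • conv ω n K f := by
  funext h
  simp only [conv, Pi.smul_apply, smul_eq_mul, mul_assoc, ← Finset.mul_sum]
  exact mul_left_comm ..

theorem conv_rt (K f : V × k → ℂ) (h : V × k) :
    conv ω n K (rt ω h f) = rt ω h (conv ω n K f) := by
  funext y
  simp only [conv, rt, hMul_assoc]

theorem conv_apply_eq_sum_hMul_hInv (K f : V × k → ℂ) (h : V × k) :
    conv ω n K f h =
      (Fintype.card k : ℂ)⁻¹ ^ (n + 1) * ∑ x : V × k, K (hMul ω h (hInv ω x)) * f x := by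
  let := heisenbergGroup ω
  have hsum : ∑ x, K x * f (x⁻¹ * h) = ∑ x, K (h * x⁻¹) * f x := by
    rw [← (Equiv.divLeft h).sum_comp]
    simp [div_eq_mul_inv]
  exact congrArg _ hsum

theorem conv_hMul (K f : V × k → ℂ) (a h : V × k) :
    conv ω n K f (hMul ω a h) = conv ω n (fun x => K (hMul ω a x)) f h := by
  simp only [conv_apply_eq_sum_hMul_hInv, hMul_assoc]

theorem conv_eq_smul_sum_smul_rt (K f : V × k → ℂ) :
    conv ω n K f =
      (Fintype.card k : ℂ)⁻¹ ^ (n + 1) • ∑ x : V × k, f x • rt ω (hInv ω x) K := by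
  funext h
  simp only [conv_apply_eq_sum_hMul_hInv, Pi.smul_apply, Finset.sum_apply, smul_eq_mul, rt,
    mul_comm (f _)]

variable {ω} in
theorem map_conv {T : (V × k → ℂ) →ₗ[ℂ] (V × k → ℂ)} {K : V × k → ℂ}
    (hT : ∀ h, T (rt ω h K) = rt ω h (T K)) (f : V × k → ℂ) :
    T (conv ω n K f) = conv ω n (T K) f := by
  simp only [conv_eq_smul_sum_smul_rt, map_smul, map_sum, hT]

end Convolution

section Models

omit [Fintype k] [Fintype V]

variable {ω : V →ₗ[k] V →ₗ[k] k} {M L : Submodule k V}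

theorem mem_model {ψ : k → ℂ} {f : V × k → ℂ} :
    f ∈ model ω L ψ ↔ ∀ z : k, ∀ l ∈ L, ∀ h, f (hMul ω (l, z) h) = ψ z * f h := by
  change (∀ z : k, ∀ l ∈ L, ∀ h, f (hMul ω (0, z) (hMul ω (l, 0) h)) = ψ z * f h) ↔ _
  simp only [← hMul_assoc, center_hMul]

theorem apply_hMul_of_mem_model {ψ : k → ℂ} {f : V × k → ℂ} (hf : f ∈ model ω L ψ)
    {x : V × k} (hx : x.1 ∈ L) (h : V × k) : f (hMul ω x h) = ψ x.2 * f h :=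
  mem_model.1 hf x.2 x.1 hx h

theorem mem_biModel {ψ : AddChar k ℂ} {K : V × k → ℂ} :
    K ∈ biModel ω M L ψ ↔ K ∈ model ω M ψ ∧ ∀ l ∈ L, rt ω (l, 0) K = K := by
  have hdef : K ∈ biModel ω M L ψ ↔
      ∀ z : k, ∀ m ∈ M, ∀ l ∈ L, ∀ h, K (hMul ω (hMul ω (m, z) h) (l, 0)) = ψ z * K h := by
    change (∀ z : k, ∀ m ∈ M, ∀ l ∈ L, ∀ h,
      K (hMul ω (hMul ω (hMul ω (0, z) (m, 0)) h) (l, 0)) = ψ z * K h) ↔ _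
    simp only [center_hMul]
  rw [hdef, mem_model]
  refine ⟨fun hK => ⟨fun z m hm h => ?_, fun l hl => funext fun h => ?_⟩,
    fun ⟨hM, hL⟩ z m hm l hl h => ?_⟩
  · simpa only [hMul_zero] using hK z m hm 0 L.zero_mem h
  · simpa [hMul, rt] using hK 0 0 M.zero_mem l hl h
  · rw [← hM z m hm h]
    exact congrFun (hL l hl) _

theorem apply_hMul_of_mem_biModel {ψ : AddChar k ℂ} {K : V × k → ℂ} (hK : K ∈ biModel ω M L ψ)
    (h : V × k) {x : V × k} (hx : x.1 ∈ L) : K (hMul ω h x) = ψ x.2 * K h := by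
  obtain ⟨hM, hL⟩ := mem_biModel.1 hK
  rw [hMul_eq_center_hMul, mem_model.1 hM _ _ M.zero_mem]
  exact congrArg _ (congrFun (hL _ hx) h)

end Models

theorem conv_mem_model {ω : V →ₗ[k] V →ₗ[k] k} {M : Submodule k V} {ψ : k → ℂ} {K : V × k → ℂ}
    (n : ℕ) (hK : K ∈ model ω M ψ) (f : V × k → ℂ) : conv ω n K f ∈ model ω M ψ := by
  refine mem_model.2 fun z m hm h => ?_
  simp only [conv_hMul, mem_model.1 hK z m hm]
  exact congrFun (smul_conv ω n (ψ z) K f) h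

theorem sum_ite_fst_mem (L : Submodule k V) (c : ℂ) :
    ∑ x : V × k, (if x.1 ∈ L then c else 0) =
      (Fintype.card k : ℂ) ^ (Module.finrank k L + 1) * c := by
  have hcard : (Finset.univ.filter (· ∈ L)).card = Fintype.card k ^ Module.finrank k L := by
    rw [← Module.card_eq_pow_finrank, ← Fintype.card_subtype]
  rw [Fintype.sum_prod_type_right]
  simp only [← Finset.sum_filter, Finset.sum_const, hcard, Finset.card_univ, nsmul_eq_mul,
    Nat.cast_pow]
  ring

theorem inv_card_pow_mul_sum_ite_fst_mem (L : Submodule k V) (c : ℂ) :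
    (Fintype.card k : ℂ)⁻¹ ^ (Module.finrank k L + 1) *
      ∑ x : V × k, (if x.1 ∈ L then c else 0) = c := by
  have hq : (Fintype.card k : ℂ) ≠ 0 := Nat.cast_ne_zero.2 Fintype.card_ne_zero
  rw [sum_ite_fst_mem, inv_pow, inv_mul_cancel_left₀ (pow_ne_zero _ hq)]

section Delta

/-- The function `δ` on the Heisenberg group that is `ψ(z)` at `(l, z)` for `l ∈ L` and vanishes
off `L × k`: the kernel of the identity of `ℂ(L\H, ψ)`. -/
noncomputable def modelDelta (L : Submodule k V) (ψ : k → ℂ) : V × k → ℂ :=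
  fun x => if x.1 ∈ L then ψ x.2 else 0

variable {ω : V →ₗ[k] V →ₗ[k] k} {ψ : AddChar k ℂ} {M L : Submodule k V}

omit [Fintype k] [Fintype V] in
theorem modelDelta_mem_biModel (hL : ∀ x ∈ L, ∀ y ∈ L, ω x y = 0) :
    modelDelta L ψ ∈ biModel ω L L ψ := by
  refine mem_biModel.2 ⟨mem_model.2 fun z l hl h => ?_, fun l hl => funext fun h => ?_⟩
  · by_cases hh : h.1 ∈ L
    · simp [modelDelta, hMul, L.add_mem_iff_right hl, hh, hL l hl _ hh, AddChar.map_add_eq_mul]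
    · simp [modelDelta, hMul, L.add_mem_iff_right hl, hh]
  · by_cases hh : h.1 ∈ L
    · simp [modelDelta, rt, hMul, L.add_mem_iff_left hl, hh, hL _ hh l hl]
    · simp [modelDelta, rt, hMul, L.add_mem_iff_left hl, hh]

theorem conv_modelDelta (hL : ∀ x ∈ L, ω x x = 0) {K : V × k → ℂ}
    (hK : K ∈ biModel ω M L ψ) : conv ω (Module.finrank k L) K (modelDelta L ψ) = K := by
  funext h
  have hterm (x : V × k) : K (hMul ω h (hInv ω x)) * modelDelta L ψ x =
      if x.1 ∈ L then K h else 0 := by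
    unfold modelDelta
    split_ifs with hx
    · rw [hInv_eq_neg (hL _ hx), apply_hMul_of_mem_biModel hK h (x := -x) (L.neg_mem hx),
        mul_right_comm, Prod.snd_neg, ← AddChar.map_add_eq_mul, neg_add_cancel,
        AddChar.map_zero_eq_one, one_mul]
    · exact mul_zero _
  simp only [conv_apply_eq_sum_hMul_hInv, hterm, inv_card_pow_mul_sum_ite_fst_mem]

theorem modelDelta_conv (hL : ∀ x ∈ L, ω x x = 0) {f : V × k → ℂ}
    (hf : f ∈ model ω L ψ) : conv ω (Module.finrank k L) (modelDelta L ψ) f = f := by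
  funext h
  have hterm (x : V × k) : modelDelta L ψ x * f (hMul ω (hInv ω x) h) =
      if x.1 ∈ L then f h else 0 := by
    unfold modelDelta
    split_ifs with hx
    · rw [hInv_eq_neg (hL _ hx), apply_hMul_of_mem_model hf (x := -x) (L.neg_mem hx),
        ← mul_assoc, Prod.snd_neg, ← AddChar.map_add_eq_mul, add_neg_cancel,
        AddChar.map_zero_eq_one, one_mul]
    · exact zero_mul _
  simp only [conv, hterm, inv_card_pow_mul_sum_ite_fst_mem]

end Delta

theorem kernel_transform_general (ω : V →ₗ[k] V →ₗ[k] k) (n : ℕ) (ψ : AddChar k ℂ)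
    (M L : Submodule k V) (hLiso : ∀ x ∈ L, ∀ y ∈ L, ω x y = 0) (hLrank : Module.finrank k L = n) :
    (∀ K ∈ biModel ω M L ψ, ∀ f ∈ model ω L ψ, conv ω n K f ∈ model ω M ψ) ∧
    (∀ K K' f : V × k → ℂ, conv ω n (K + K') f = conv ω n K f + conv ω n K' f) ∧
    (∀ (c : ℂ) (K f : V × k → ℂ), conv ω n (c • K) f = c • conv ω n K f) ∧
    (∀ K ∈ biModel ω M L ψ, ∀ f ∈ model ω L ψ, ∀ h : V × k,
        conv ω n K (rt ω h f) = rt ω h (conv ω n K f)) ∧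
    (∀ K ∈ biModel ω M L ψ, ∀ K' ∈ biModel ω M L ψ,
        (∀ f ∈ model ω L ψ, conv ω n K f = conv ω n K' f) → K = K') ∧
    (∀ T : (V × k → ℂ) →ₗ[ℂ] (V × k → ℂ),
        (∀ f ∈ model ω L ψ, T f ∈ model ω M ψ) →
        (∀ f ∈ model ω L ψ, ∀ h : V × k, T (rt ω h f) = rt ω h (T f)) →
        ∃ K ∈ biModel ω M L ψ, ∀ f ∈ model ω L ψ, conv ω n K f = T f) := by
  subst hLrank
  have hLalt : ∀ x ∈ L, ω x x = 0 := fun x hx => hLiso x hx x hx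
  obtain ⟨hδ, hδL⟩ := mem_biModel.1 (modelDelta_mem_biModel (ψ := ψ) hLiso)
  refine ⟨fun K hK f _ => conv_mem_model _ (mem_biModel.1 hK).1 f, add_conv ω _, smul_conv ω _,
    fun K _ f _ => conv_rt ω _ K f, fun K hK K' hK' hKK' => ?_,
    fun T hTM hT => ⟨T (modelDelta L ψ), mem_biModel.2 ⟨hTM _ hδ, fun l hl => ?_⟩,
      fun f hf => ?_⟩⟩
  · rw [← conv_modelDelta hLalt hK, hKK' _ hδ, conv_modelDelta hLalt hK']
  · rw [← hT _ hδ, hδL l hl]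
  · rw [← map_conv _ (hT _ hδ), modelDelta_conv hLalt hf]

/-- The bundled additive character underlying `IsAddChar`. -/
noncomputable def IsAddChar.toAddChar {ψ : k → ℂ} (hψ : IsAddChar ψ) : AddChar k ℂ where
  toFun := ψ
  map_zero_eq_one' := by
    have hmul : ψ 0 * ψ 0 = ψ 0 * 1 := by rw [← hψ.1, add_zero, mul_one]
    exact mul_left_cancel₀ (hψ.2.1 0) hmul
  map_add_eq_mul' := hψ.1

/-- the kernel transform `I[K](f) = K ∗ f` is a linear isomorphism from
`ℂ(M\\H/L, ψ)` onto the space of `H`-equivariant linear maps `ℂ(L\\H,ψ) → ℂ(M\\H,ψ)`. -/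
theorem kernel_transform
    (ω : V →ₗ[k] V →ₗ[k] k) (n : ℕ)
    (hchar : ringChar k ≠ 2)
    (hdim : Module.finrank k V = 2 * n)
    (halt : ∀ v : V, ω v v = 0)
    (hnd : ∀ v : V, (∀ u : V, ω v u = 0) → v = 0)
    (ψ : k → ℂ) (hψ : IsAddChar ψ)
    (M L : Submodule k V)
    (hMiso : ∀ x ∈ M, ∀ y ∈ M, ω x y = 0) (hMrank : Module.finrank k M = n)
    (hLiso : ∀ x ∈ L, ∀ y ∈ L, ω x y = 0) (hLrank : Module.finrank k L = n) :
    (∀ K ∈ biModel ω M L ψ, ∀ f ∈ model ω L ψ, conv ω n K f ∈ model ω M ψ) ∧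
    (∀ K K' f : V × k → ℂ, conv ω n (K + K') f = conv ω n K f + conv ω n K' f) ∧
    (∀ (c : ℂ) (K f : V × k → ℂ), conv ω n (c • K) f = c • conv ω n K f) ∧
    (∀ K ∈ biModel ω M L ψ, ∀ f ∈ model ω L ψ, ∀ h : V × k,
        conv ω n K (rt ω h f) = rt ω h (conv ω n K f)) ∧
    (∀ K ∈ biModel ω M L ψ, ∀ K' ∈ biModel ω M L ψ,
        (∀ f ∈ model ω L ψ, conv ω n K f = conv ω n K' f) → K = K') ∧
    (∀ T : (V × k → ℂ) →ₗ[ℂ] (V × k → ℂ),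
        (∀ f ∈ model ω L ψ, T f ∈ model ω M ψ) →
        (∀ f ∈ model ω L ψ, ∀ h : V × k, T (rt ω h f) = rt ω h (T f)) →
        ∃ K ∈ biModel ω M L ψ, ∀ f ∈ model ω L ψ, conv ω n K f = T f) :=
  kernel_transform_general ω n hψ.toAddChar M L hLiso hLrank
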